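/- Under the stated setup and assumptions, for every p ∈ [2,∞] the low-rank approximation error satisfies ‖(I − QQ*)A‖_p² ≤ ‖Σ_⊥‖_p² + γ_k^{4q}·‖Σ_⊥Ω_2Ω_1†‖_p² in the Schatten-p norm. -/

import Mathlib

open scoped ENNReal
open Matrix

/-- The `j`-th largest singular value (0-indexed) of a complex matrix,
obtained as the decreasingly sorted square roots of the eigenvalues of `Mᴴ * M`. -/
noncomputable def sval {m n : ℕ} (M : Matrix (Fin m) (Fin n) ℂ) (j : ℕ) : ℝ :=
  (List.insertionSort (· ≥ ·)
    ((List.ofFn (Matrix.isHermitian_conjTranspose_mul_self M).eigenvalues).map Real.sqrt)).getD j 0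

/-- The Schatten-`p` norm (`p = ∞` gives the spectral norm). -/
noncomputable def schatten {m n : ℕ} (p : ℝ≥0∞) (M : Matrix (Fin m) (Fin n) ℂ) : ℝ :=
  if p = ⊤ then sval M 0
  else (∑ j ∈ Finset.range n, sval M j ^ p.toReal) ^ (1 / p.toReal)

/-- Moore–Penrose pseudoinverse of a full-row-rank matrix. -/
noncomputable def rpinv {a b : ℕ} (M : Matrix (Fin a) (Fin b) ℂ) : Matrix (Fin b) (Fin a) ℂ :=
  Mᴴ * (M * Mᴴ)⁻¹

/-- Rectangular diagonal matrix with entries `σ (off), σ (off+1), …` on the diagonal. -/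
noncomputable def diagRect (σ : ℕ → ℝ) (off a b : ℕ) : Matrix (Fin a) (Fin b) ℂ :=
  Matrix.of fun i j => if (i : ℕ) = (j : ℕ) then (σ (off + (i : ℕ)) : ℂ) else 0

/-- The first `b` columns of a matrix with `b + c` columns. -/
def colsL {a b c : ℕ} (M : Matrix (Fin a) (Fin (b + c)) ℂ) : Matrix (Fin a) (Fin b) ℂ :=
  M.submatrix id (Fin.castAdd c)

/-- The last `c` columns of a matrix with `b + c` columns. -/
def colsR {a b c : ℕ} (M : Matrix (Fin a) (Fin (b + c)) ℂ) : Matrix (Fin a) (Fin c) ℂ :=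
  M.submatrix id (Fin.natAdd b)

/-!
In the SVD coordinates `Y * Ω₁† = U_k ((D Dᴴ)^q D) + U_⊥ ((S Sᴴ)^q S (Ω₂ Ω₁†))`, where `D` and `S`
are the leading and trailing diagonal blocks. Normalizing the first block shows that the range of
`Y`, hence that of `Q`, contains a graph `U_k + U_⊥ F` with
`F D = (S Sᴴ)^q (S Ω₂ Ω₁†) (D⁻¹ D⁻¹ᴴ)^q`. The projection `E = 1 - Q Qᴴ` annihilates this graph, so
`E A = E U_⊥ (S V_⊥ᴴ - F D V_kᴴ)`, and by orthogonality of `V_k` and `V_⊥` the matrix `(E A) (E A)ᴴ`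
is the sum of those of `E U_⊥ S` and `E U_⊥ F D`.

The squared Schatten-`p` norm is the `ℓ^(p/2)` norm of the eigenvalues of a Gram matrix. As
`p / 2 ≥ 1`, this is subadditive: the diagonal of a Hermitian matrix in an orthonormal basis is the
image of its eigenvalues under a doubly stochastic matrix, which by Birkhoff's theorem is a convex
combination of permutations and so does not increase the `ℓ^(p/2)` norm; now compare the diagonals
in an eigenbasis of the sum.
-/

section LpNorm

open WithLp

variable {ι κ : Type*} [Fintype ι] [Fintype κ] {p : ℝ≥0∞}

lemma norm_toLp_mono [Fact (1 ≤ p)] {x y : ι → ℝ} (h : ∀ i, |x i| ≤ |y i|) :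
    ‖toLp p x‖ ≤ ‖toLp p y‖ := by
  rcases p.dichotomy with rfl | hp
  · rw [PiLp.norm_toLp, PiLp.norm_toLp]
    exact (pi_norm_le_iff_of_nonneg (norm_nonneg y)).2 fun i ↦ (h i).trans (norm_le_pi_norm y i)
  · have hp0 : 0 < p.toReal := zero_lt_one.trans_le hp
    simp only [PiLp.norm_eq_sum hp0]
    gcongr with i
    exact h i

lemma norm_toLp_eq_of_map_univ_add_replicate_eq [Fact (1 ≤ p)] {x : ι → ℝ} {y : κ → ℝ} {a b : ℕ}
    (h : Finset.univ.val.map x + Multiset.replicate a 0 =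
      Finset.univ.val.map y + Multiset.replicate b 0) :
    ‖toLp p x‖ = ‖toLp p y‖ := by
  rcases p.dichotomy with rfl | hp
  · have hzero (a : ℕ) : (Multiset.replicate a (0 : NNReal)).sup = 0 :=
      bot_unique (Multiset.sup_le.2 fun b hb ↦ (Multiset.eq_of_mem_replicate hb).le)
    have := congrArg (fun s ↦ (s.map (‖·‖₊)).sup) h
    simp only [Multiset.map_add, Multiset.map_map, Multiset.map_replicate, nnnorm_zero,
      Multiset.sup_add, hzero] at this
    simpa [PiLp.norm_toLp, Pi.norm_def, Finset.sup_def, Function.comp_def] using this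
  · have hp0 : 0 < p.toReal := zero_lt_one.trans_le hp
    have := congrArg (fun s ↦ (s.map (‖·‖ ^ p.toReal)).sum) h
    simp only [Multiset.map_add, Multiset.map_map, Multiset.map_replicate, norm_zero,
      Multiset.sum_add, Real.zero_rpow hp0.ne', Multiset.sum_replicate, smul_zero, add_zero] at this
    simp only [PiLp.norm_eq_sum hp0]
    exact congrArg (· ^ (1 / p.toReal)) this

lemma one_le_div_two (hp : 2 ≤ p) : 1 ≤ p / 2 :=
  (ENNReal.le_div_iff_mul_le (by simp) (by simp)).2 (by simpa using hp)

lemma norm_toLp_sq (hp : 2 ≤ p) (x : ι → ℝ) :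
    ‖toLp p x‖ ^ 2 = ‖toLp (p / 2) (x ^ 2)‖ := by
  rcases eq_or_ne p ⊤ with rfl | hp'
  · rw [ENNReal.top_div_of_ne_top (by simp), PiLp.norm_toLp, PiLp.norm_toLp]
    simp only [← coe_nnnorm, Pi.nnnorm_def, Pi.pow_apply, nnnorm_pow]
    exact congrArg NNReal.toReal <| Finset.apply_sup_eq_sup_comp_of_linearOrder (· ^ (2 : ℕ))
      (pow_left_mono 2) (zero_pow two_ne_zero)
  · have hp2 : 2 ≤ p.toReal := by simpa using ENNReal.toReal_mono hp' hp
    have hhalf : (p / 2).toReal = p.toReal / 2 := by simp [ENNReal.toReal_div]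
    rw [PiLp.norm_eq_sum (by linarith), PiLp.norm_eq_sum (by rw [hhalf]; linarith), hhalf,
      ← Real.rpow_mul_natCast (Finset.sum_nonneg fun i _ ↦ by positivity)]
    congr 1
    · refine Finset.sum_congr rfl fun i _ ↦ ?_
      simp only [Pi.pow_apply, norm_pow]
      rw [← Real.rpow_natCast_mul (norm_nonneg _)]
      congr 1
      push_cast; ring
    · push_cast; field_simp

lemma norm_toLp_mulVec_le_of_mem_doublyStochastic [DecidableEq ι] [Fact (1 ≤ p)]
    {P : Matrix ι ι ℝ} (hP : P ∈ doublyStochastic ℝ ι) (x : ι → ℝ) :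
    ‖toLp p (P *ᵥ x)‖ ≤ ‖toLp p x‖ := by
  let L : Matrix ι ι ℝ →ₗ[ℝ] PiLp p fun _ : ι ↦ ℝ :=
    (WithLp.linearEquiv p ℝ (ι → ℝ)).symm.toLinearMap ∘ₗ (mulVecBilin ℝ ℝ).flip x
  rw [← SetLike.mem_coe, doublyStochastic_eq_convexHull_permMatrix] at hP
  obtain ⟨_, ⟨σ, rfl⟩, hσ⟩ :=
    (convexOn_univ_norm.comp_linearMap L).exists_ge_of_mem_convexHull (by simp) hP
  refine hσ.trans_eq ?_
  change ‖toLp p (σ.permMatrix ℝ *ᵥ x)‖ = _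
  rw [permMatrix_mulVec]
  exact (LinearIsometryEquiv.piLpCongrLeft p ℝ ℝ σ.symm).norm_map (toLp p x)

end LpNorm

section Hermitian

open WithLp

variable {𝕜 n : Type*} [RCLike 𝕜] [Fintype n] [DecidableEq n]

lemma normSq_entries_mem_doublyStochastic (U : unitaryGroup n 𝕜) :
    (of fun i j ↦ ‖(U : Matrix n n 𝕜) i j‖ ^ 2) ∈ doublyStochastic ℝ n := by
  refine mem_doublyStochastic_iff_sum.mpr ⟨fun i j ↦ sq_nonneg _, fun i ↦ ?_, fun j ↦ ?_⟩
  · have h := congrFun₂ (mem_unitaryGroup_iff.1 U.2) i i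
    simp only [mul_apply, star_apply, RCLike.star_def, RCLike.mul_conj, one_apply_eq] at h
    exact_mod_cast h
  · have h := congrFun₂ (mem_unitaryGroup_iff'.1 U.2) j j
    simp only [mul_apply, star_apply, RCLike.star_def, RCLike.conj_mul, one_apply_eq] at h
    exact_mod_cast h

/-- The diagonal of the quadratic form `H` in the orthonormal basis formed by the columns of `X`;
the real part loses nothing when `H` is Hermitian. -/
def diagConj (X : unitaryGroup n 𝕜) (H : Matrix n n 𝕜) (i : n) : ℝ :=
  RCLike.re ((star (X : Matrix n n 𝕜) * H * X) i i)

variable {H K : Matrix n n 𝕜} {r : ℝ≥0∞} [Fact (1 ≤ r)]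

lemma diagConj_eq_mulVec_eigenvalues (hH : H.IsHermitian) (X : unitaryGroup n 𝕜) :
    diagConj X H =
      (of fun i j ↦ ‖(star X * hH.eigenvectorUnitary : unitaryGroup n 𝕜).1 i j‖ ^ 2) *ᵥ
        hH.eigenvalues := by
  ext i
  set W := star X * hH.eigenvectorUnitary with hW
  have h : star (X : Matrix n n 𝕜) * H * (X : Matrix n n 𝕜) =
      (W : Matrix n n 𝕜) * diagonal (RCLike.ofReal ∘ hH.eigenvalues) *
        star (W : Matrix n n 𝕜) := by
    conv_lhs => rw [hH.spectral_theorem, Unitary.conjStarAlgAut_apply]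
    simp [hW, mul_assoc]
  simp only [diagConj, h, mul_apply (M := W.1 * _), mul_diagonal, star_apply, map_sum, mulVec,
    dotProduct, of_apply]
  refine Finset.sum_congr rfl fun j _ ↦ ?_
  rw [mul_right_comm, RCLike.star_def, RCLike.mul_conj, Function.comp_apply]
  norm_cast

lemma diagConj_eigenvectorUnitary (hH : H.IsHermitian) :
    diagConj hH.eigenvectorUnitary H = hH.eigenvalues := by
  ext i
  have := hH.conjStarAlgAut_star_eigenvectorUnitary
  rw [Unitary.conjStarAlgAut_star_apply] at this
  simp [diagConj, this]

lemma norm_toLp_diagConj_le (hH : H.IsHermitian) (X : unitaryGroup n 𝕜) :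
    ‖toLp r (diagConj X H)‖ ≤ ‖toLp r hH.eigenvalues‖ := by
  rw [diagConj_eq_mulVec_eigenvalues hH]
  exact norm_toLp_mulVec_le_of_mem_doublyStochastic
    (normSq_entries_mem_doublyStochastic (star X * hH.eigenvectorUnitary)) _

lemma norm_toLp_eigenvalues_add_le (hH : H.IsHermitian) (hK : K.IsHermitian) :
    ‖toLp r (hH.add hK).eigenvalues‖ ≤ ‖toLp r hH.eigenvalues‖ + ‖toLp r hK.eigenvalues‖ := by
  set X := (hH.add hK).eigenvectorUnitary
  calc
    ‖toLp r (hH.add hK).eigenvalues‖ = ‖toLp r (diagConj X H) + toLp r (diagConj X K)‖ := by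
      rw [← diagConj_eigenvectorUnitary, ← toLp_add]
      congr 2
      ext i
      simp [diagConj, mul_add, add_mul, X]
    _ ≤ ‖toLp r (diagConj X H)‖ + ‖toLp r (diagConj X K)‖ := norm_add_le _ _
    _ ≤ ‖toLp r hH.eigenvalues‖ + ‖toLp r hK.eigenvalues‖ :=
      add_le_add (norm_toLp_diagConj_le hH X) (norm_toLp_diagConj_le hK X)

open scoped ComplexOrder in
lemma norm_toLp_eigenvalues_le_mul (hH : H.PosSemidef) (hK : K.IsHermitian) {c : ℝ} (hc : 0 ≤ c)
    (h : (c • K - H).PosSemidef) :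
    ‖toLp r hH.isHermitian.eigenvalues‖ ≤ c * ‖toLp r hK.eigenvalues‖ := by
  set X := hH.isHermitian.eigenvectorUnitary
  have hle (i : n) : |hH.isHermitian.eigenvalues i| ≤ |(c • diagConj X K) i| := by
    rw [abs_of_nonneg (hH.eigenvalues_nonneg i)]
    refine le_trans ?_ (le_abs_self _)
    have hdiag := (h.conjTranspose_mul_mul_same (X : Matrix n n 𝕜)).diag_nonneg (i := i)
    rw [← diagConj_eigenvectorUnitary]
    simpa [mul_sub, sub_mul, diagConj, star_eq_conjTranspose, RCLike.smul_re] using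
      (RCLike.le_iff_re_im.1 hdiag).1
  calc
    ‖toLp r hH.isHermitian.eigenvalues‖ ≤ ‖toLp r (c • diagConj X K)‖ := norm_toLp_mono hle
    _ = c * ‖toLp r (diagConj X K)‖ := by rw [toLp_smul, norm_smul, Real.norm_of_nonneg hc]
    _ ≤ c * ‖toLp r hK.eigenvalues‖ := by
      gcongr
      exact norm_toLp_diagConj_le hK X

lemma map_univ_eigenvalues_add_replicate_zero (hH : H.IsHermitian) (a : ℕ) :
    Finset.univ.val.map hH.eigenvalues + Multiset.replicate a 0 =
      (Polynomial.X ^ a * H.charpoly).roots.map RCLike.re := by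
  rw [Polynomial.roots_mul ((Polynomial.monic_X_pow a).mul H.charpoly_monic).ne_zero,
    hH.roots_charpoly_eq_eigenvalues, Polynomial.roots_X_pow, Multiset.map_add,
    Multiset.map_map, Multiset.map_nsmul, Multiset.map_singleton, Multiset.nsmul_singleton,
    map_zero, add_comm]
  simp [Function.comp_def]

lemma norm_toLp_eigenvalues_conjTranspose {m : Type*} [Fintype m] [DecidableEq m]
    (M : Matrix m n 𝕜) :
    ‖toLp r (isHermitian_conjTranspose_mul_self Mᴴ).eigenvalues‖ =
      ‖toLp r (isHermitian_conjTranspose_mul_self M).eigenvalues‖ := by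
  refine norm_toLp_eq_of_map_univ_add_replicate_eq (a := Fintype.card n) (b := Fintype.card m) ?_
  rw [map_univ_eigenvalues_add_replicate_zero, map_univ_eigenvalues_add_replicate_zero]
  simp only [conjTranspose_conjTranspose]
  rw [charpoly_mul_comm' M Mᴴ]

end Hermitian

section Schatten

open WithLp
open scoped ComplexOrder

variable {m n : ℕ} {p : ℝ≥0∞}

lemma antitone_getD_of_pairwise_ge {α : Type*} [Preorder α] {L : List α} {d : α}
    (hL : L.Pairwise (· ≥ ·)) (hd : ∀ x ∈ L, d ≤ x) : Antitone fun j ↦ L.getD j d := by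
  intro i j hij
  dsimp only
  rcases lt_or_ge j L.length with hj | hj
  · rw [List.getD_eq_getElem _ _ hj, List.getD_eq_getElem _ _ (hij.trans_lt hj)]
    exact hL.sortedGE.antitone_get hij
  · rw [List.getD_eq_default _ _ hj]
    rcases lt_or_ge i L.length with hi | hi
    · rw [List.getD_eq_getElem _ _ hi]
      exact hd _ (List.getElem_mem hi)
    · rw [List.getD_eq_default _ _ hi]

lemma map_univ_sval (M : Matrix (Fin m) (Fin n) ℂ) :
    Finset.univ.val.map (fun j : Fin n ↦ sval M j) =
      Finset.univ.val.map (fun i ↦ √((isHermitian_conjTranspose_mul_self M).eigenvalues i)) := by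
  rw [Fin.univ_val_map, Fin.univ_val_map, Multiset.coe_eq_coe]
  set L := (List.ofFn (isHermitian_conjTranspose_mul_self M).eigenvalues).map Real.sqrt
  have hlen : (L.insertionSort (· ≥ ·)).length = n := by simp [L]
  have hsort : List.ofFn (fun j : Fin n ↦ sval M j) = L.insertionSort (· ≥ ·) := by
    refine List.ext_getElem (by simp [hlen]) fun j _ hj ↦ ?_
    rw [List.getElem_ofFn]
    exact List.getD_eq_getElem _ _ hj
  rw [hsort]
  refine (List.perm_insertionSort _ L).trans (List.Perm.of_eq ?_)
  exact List.map_ofFn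

lemma sval_eq_zero_of_le (M : Matrix (Fin m) (Fin n) ℂ) {j : ℕ} (hj : n ≤ j) : sval M j = 0 :=
  List.getD_eq_default _ _ (by simpa using hj)

lemma sval_antitone (M : Matrix (Fin m) (Fin n) ℂ) : Antitone (sval M) := by
  refine antitone_getD_of_pairwise_ge (List.pairwise_insertionSort _ _) fun x hx ↦ ?_
  obtain ⟨t, -, rfl⟩ := List.mem_map.1 ((List.mem_insertionSort _).1 hx)
  exact Real.sqrt_nonneg t

lemma sval_nonneg (M : Matrix (Fin m) (Fin n) ℂ) (j : ℕ) : 0 ≤ sval M j :=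
  (sval_eq_zero_of_le M (le_max_right j n)).ge.trans (sval_antitone M (le_max_left j n))

lemma schatten_nonneg (p : ℝ≥0∞) (M : Matrix (Fin m) (Fin n) ℂ) : 0 ≤ schatten p M := by
  rw [schatten]
  split_ifs
  · exact sval_nonneg M 0
  · exact Real.rpow_nonneg (Finset.sum_nonneg fun j _ ↦ Real.rpow_nonneg (sval_nonneg M j) _) _

lemma schatten_eq_norm_toLp_sval [Fact (1 ≤ p)] (M : Matrix (Fin m) (Fin n) ℂ) :
    schatten p M = ‖toLp p (fun j : Fin n ↦ sval M j)‖ := by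
  rcases p.dichotomy with rfl | hp
  · rw [schatten, if_pos rfl, PiLp.norm_toLp]
    refine le_antisymm ?_ ((pi_norm_le_iff_of_nonneg (sval_nonneg M 0)).2 fun j ↦ ?_)
    · rcases n.eq_zero_or_pos with rfl | hn
      · exact (sval_eq_zero_of_le M le_rfl).trans_le (norm_nonneg _)
      · exact (le_abs_self _).trans (norm_le_pi_norm (fun j : Fin n ↦ sval M j) ⟨0, hn⟩)
    · rw [Real.norm_of_nonneg (sval_nonneg M j)]
      exact sval_antitone M j.1.zero_le
  · rw [schatten, if_neg (by rintro rfl; simp at hp; linarith), PiLp.norm_eq_sum (by linarith),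
      Finset.sum_range]
    simp only [Real.norm_of_nonneg (sval_nonneg M _)]

lemma schatten_eq_norm_toLp_sqrt_eigenvalues [Fact (1 ≤ p)] (M : Matrix (Fin m) (Fin n) ℂ) :
    schatten p M =
      ‖toLp p fun i ↦ √((isHermitian_conjTranspose_mul_self M).eigenvalues i)‖ := by
  rw [schatten_eq_norm_toLp_sval]
  exact norm_toLp_eq_of_map_univ_add_replicate_eq (a := 0) (b := 0)
    (congrArg (· + 0) (map_univ_sval M))

lemma schatten_sq (hp : 2 ≤ p) (M : Matrix (Fin m) (Fin n) ℂ) :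
    schatten p M ^ 2 = ‖toLp (p / 2) (isHermitian_conjTranspose_mul_self M).eigenvalues‖ := by
  have : Fact (1 ≤ p) := ⟨one_le_two.trans hp⟩
  rw [schatten_eq_norm_toLp_sqrt_eigenvalues, norm_toLp_sq hp]
  congr 2
  ext i
  exact Real.sq_sqrt ((posSemidef_conjTranspose_mul_self M).eigenvalues_nonneg i)

lemma schatten_conjTranspose (hp : 2 ≤ p) (M : Matrix (Fin m) (Fin n) ℂ) :
    schatten p Mᴴ = schatten p M := by
  have : Fact (1 ≤ p / 2) := ⟨one_le_div_two hp⟩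
  rw [← pow_left_inj₀ (schatten_nonneg p _) (schatten_nonneg p _) two_ne_zero, schatten_sq hp,
    schatten_sq hp]
  exact norm_toLp_eigenvalues_conjTranspose M

lemma schatten_sq_le_add_of_conjTranspose_mul_self (hp : 2 ≤ p) {a b c : ℕ}
    {M : Matrix (Fin a) (Fin n) ℂ} {X : Matrix (Fin b) (Fin n) ℂ} {Y : Matrix (Fin c) (Fin n) ℂ}
    (h : Mᴴ * M = Xᴴ * X + Yᴴ * Y) :
    schatten p M ^ 2 ≤ schatten p X ^ 2 + schatten p Y ^ 2 := by
  have : Fact (1 ≤ p / 2) := ⟨one_le_div_two hp⟩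
  rw [schatten_sq hp, schatten_sq hp, schatten_sq hp]
  convert norm_toLp_eigenvalues_add_le (r := p / 2) (isHermitian_conjTranspose_mul_self X)
    (isHermitian_conjTranspose_mul_self Y)

lemma schatten_sq_le_add_of_mul_conjTranspose_self (hp : 2 ≤ p) {a b c : ℕ}
    {M : Matrix (Fin n) (Fin a) ℂ} {X : Matrix (Fin n) (Fin b) ℂ} {Y : Matrix (Fin n) (Fin c) ℂ}
    (h : M * Mᴴ = X * Xᴴ + Y * Yᴴ) :
    schatten p M ^ 2 ≤ schatten p X ^ 2 + schatten p Y ^ 2 := by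
  simpa only [schatten_conjTranspose hp] using
    schatten_sq_le_add_of_conjTranspose_mul_self (M := Mᴴ) (X := Xᴴ) (Y := Yᴴ) hp
      (by simpa only [conjTranspose_conjTranspose] using h)

end Schatten

section OperatorNorm

open scoped ComplexOrder MatrixOrder Matrix.Norms.L2Operator

section

variable {𝕜 ι κ : Type*} [RCLike 𝕜] [Fintype ι] [Fintype κ] [DecidableEq κ]

lemma l2_opNorm_le_one_of_conjTranspose_mul_self_eq_one {U : Matrix ι κ 𝕜} (hU : Uᴴ * U = 1) :
    ‖U‖ ≤ 1 := by
  refine (sq_le_one_iff₀ (norm_nonneg U)).1 ?_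
  rw [sq, ← l2_opNorm_conjTranspose_mul_self, hU]
  exact (IsStarProjection.one _).norm_le

lemma l2_opNorm_one_sub_mul_conjTranspose_le [DecidableEq ι] {Q : Matrix ι κ 𝕜}
    (hQ : Qᴴ * Q = 1) : ‖1 - Q * Qᴴ‖ ≤ 1 := by
  have hproj : IsStarProjection (Q * Qᴴ) :=
    { isIdempotentElem := by
        rw [IsIdempotentElem, Matrix.mul_assoc, ← Matrix.mul_assoc Qᴴ, hQ, Matrix.one_mul]
      isSelfAdjoint := isHermitian_mul_conjTranspose_self Q }
  exact hproj.one_sub.norm_le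

lemma l2_opNorm_mul_conjTranspose_pow_le [DecidableEq ι] (B : Matrix ι κ 𝕜) (q : ℕ) :
    ‖(B * Bᴴ) ^ q‖ ≤ ‖B‖ ^ (2 * q) := by
  rcases q.eq_zero_or_pos with rfl | hq
  · simpa using (IsStarProjection.one (Matrix ι ι 𝕜)).norm_le
  · have hB : ‖B * Bᴴ‖ ≤ ‖B‖ ^ 2 := by
      simpa only [l2_opNorm_conjTranspose, sq] using l2_opNorm_mul B Bᴴ
    rw [pow_mul]
    exact (norm_pow_le' _ hq).trans (pow_le_pow_left₀ (norm_nonneg _) hB q)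

lemma l2_opNorm_inv_diagonal_le {d : κ → 𝕜} {s : ℝ} (hs : 0 < s) (hd : ∀ i, s ≤ ‖d i‖) :
    ‖(diagonal d)⁻¹‖ ≤ s⁻¹ := by
  have hd0 (i : κ) : d i ≠ 0 := norm_pos_iff.1 (hs.trans_le (hd i))
  have hinv : (diagonal d)⁻¹ = diagonal fun i ↦ (d i)⁻¹ := inv_eq_right_inv <| by
    simp [diagonal_mul_diagonal, hd0]
  rw [hinv, l2_opNorm_diagonal]
  refine (pi_norm_le_iff_of_nonneg (inv_nonneg.2 hs.le)).2 fun i ↦ ?_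
  rw [norm_inv]
  exact inv_anti₀ hs (hd i)

lemma posSemidef_sq_l2_opNorm_smul_sub (B : Matrix ι κ ℂ) :
    (‖B‖ ^ 2 • (1 : Matrix κ κ ℂ) - Bᴴ * B).PosSemidef := by
  have := IsSelfAdjoint.le_algebraMap_norm_self (isHermitian_conjTranspose_mul_self B)
  rw [l2_opNorm_conjTranspose_mul_self, ← sq, Algebra.algebraMap_eq_smul_one] at this
  exact Matrix.le_iff.1 this

end

variable {l m n : ℕ} {p : ℝ≥0∞}

lemma schatten_mul_le_l2_opNorm_mul (hp : 2 ≤ p) (B : Matrix (Fin l) (Fin m) ℂ)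
    (M : Matrix (Fin m) (Fin n) ℂ) : schatten p (B * M) ≤ ‖B‖ * schatten p M := by
  have : Fact (1 ≤ p / 2) := ⟨one_le_div_two hp⟩
  rw [← pow_le_pow_iff_left₀ (schatten_nonneg p _)
    (mul_nonneg (norm_nonneg B) (schatten_nonneg p M)) two_ne_zero, mul_pow, schatten_sq hp,
    schatten_sq hp]
  refine norm_toLp_eigenvalues_le_mul (posSemidef_conjTranspose_mul_self _) _ (sq_nonneg _) ?_
  have := (posSemidef_sq_l2_opNorm_smul_sub B).conjTranspose_mul_mul_same M
  simpa [Matrix.mul_sub, Matrix.sub_mul, Matrix.mul_assoc] using this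

lemma schatten_mul_le_mul_l2_opNorm (hp : 2 ≤ p) (M : Matrix (Fin l) (Fin m) ℂ)
    (B : Matrix (Fin m) (Fin n) ℂ) : schatten p (M * B) ≤ schatten p M * ‖B‖ := by
  have := schatten_mul_le_l2_opNorm_mul hp Bᴴ Mᴴ
  rwa [← conjTranspose_mul, schatten_conjTranspose hp, schatten_conjTranspose hp,
    l2_opNorm_conjTranspose, mul_comm] at this

end OperatorNorm

section PowerIteration

variable {R a b ι κ μ ν : Type*} [Fintype a] [DecidableEq a] [Fintype b]
  [Fintype ι] [DecidableEq ι] [Fintype κ] [Semiring R] [StarRing R]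

lemma mul_mul_conjTranspose_pow_mul [DecidableEq κ] {U : Matrix a ι R} {V : Matrix b κ R}
    (hU : Uᴴ * U = 1) (hV : Vᴴ * V = 1) (T : Matrix ι κ R) (q : ℕ) :
    (U * T * Vᴴ * (U * T * Vᴴ)ᴴ) ^ q * (U * T * Vᴴ) = U * ((T * Tᴴ) ^ q * T) * Vᴴ := by
  have hgram : U * T * Vᴴ * (U * T * Vᴴ)ᴴ = U * (T * Tᴴ) * Uᴴ := by
    calc U * T * Vᴴ * (U * T * Vᴴ)ᴴ = U * T * (Vᴴ * V) * Tᴴ * Uᴴ := by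
          simp only [conjTranspose_mul, conjTranspose_conjTranspose, Matrix.mul_assoc]
      _ = U * (T * Tᴴ) * Uᴴ := by rw [hV, Matrix.mul_one, Matrix.mul_assoc U T Tᴴ]
  rw [hgram]
  induction q with
  | zero => simp [Matrix.mul_assoc]
  | succ q ih =>
    rw [pow_succ', Matrix.mul_assoc, ih, pow_succ']
    calc U * (T * Tᴴ) * Uᴴ * (U * ((T * Tᴴ) ^ q * T) * Vᴴ)
        = U * (T * Tᴴ) * (Uᴴ * U) * ((T * Tᴴ) ^ q * T) * Vᴴ := by simp only [Matrix.mul_assoc]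
      _ = U * (T * Tᴴ * (T * Tᴴ) ^ q * T) * Vᴴ := by
        rw [hU, Matrix.mul_one]
        simp only [Matrix.mul_assoc]

lemma fromBlocks_mul_conjTranspose_pow_mul [Fintype μ] [DecidableEq μ] [Fintype ν]
    (D : Matrix ι κ R) (S : Matrix μ ν R) (q : ℕ) :
    (fromBlocks D 0 0 S * (fromBlocks D 0 0 S)ᴴ) ^ q * fromBlocks D 0 0 S =
      fromBlocks ((D * Dᴴ) ^ q * D) 0 0 ((S * Sᴴ) ^ q * S) := by
  simp [fromBlocks_conjTranspose, fromBlocks_multiply, fromBlocks_diagonal_pow]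

lemma mul_conjTranspose_pow_mul_mul_eq_one {D D' : Matrix ι ι R} (h : D * D' = 1) (h' : D' * D = 1)
    (q : ℕ) : (D * Dᴴ) ^ q * D * ((D' * D'ᴴ) ^ q * D') = 1 := by
  have hgram : Dᴴ * D * (D' * D'ᴴ) = 1 := by
    rw [Matrix.mul_assoc, ← Matrix.mul_assoc D, h, Matrix.one_mul, ← conjTranspose_mul, h',
      conjTranspose_one]
  rw [mul_pow_mul, Matrix.mul_assoc, ← Matrix.mul_assoc (_ ^ q), pow_mul_pow_eq_one q hgram,
    Matrix.one_mul, h]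

end PowerIteration

section LowRank

open scoped Matrix.Norms.L2Operator

variable {a b k m n : ℕ} {p : ℝ≥0∞}
  {Uk : Matrix (Fin a) (Fin k) ℂ} {Up : Matrix (Fin a) (Fin m) ℂ}
  {Vk : Matrix (Fin b) (Fin k) ℂ} {Vp : Matrix (Fin b) (Fin n) ℂ}
  {D : Matrix (Fin k) (Fin k) ℂ} {S : Matrix (Fin m) (Fin n) ℂ}
  {A : Matrix (Fin a) (Fin b) ℂ} {E : Matrix (Fin a) (Fin a) ℂ}

lemma schatten_sq_le_of_mul_graph_eq_zero (hp : 2 ≤ p)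
    (hV : (fromCols Vk Vp)ᴴ * fromCols Vk Vp = 1)
    (hA : A = fromCols Uk Up * fromBlocks D 0 0 S * (fromCols Vk Vp)ᴴ)
    (hE : ‖E * Up‖ ≤ 1) {F : Matrix (Fin m) (Fin k) ℂ} (hF : E * (Uk + Up * F) = 0) :
    schatten p (E * A) ^ 2 ≤ schatten p S ^ 2 + schatten p (F * D) ^ 2 := by
  have hEUk : E * Uk = -(E * Up * F) := by
    rwa [Matrix.mul_add, ← Matrix.mul_assoc, add_eq_zero_iff_eq_neg] at hF
  have hEA : E * A = fromCols (-(E * Up * (F * D))) (E * Up * S) * (fromCols Vk Vp)ᴴ := by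
    rw [hA, ← Matrix.mul_assoc, ← Matrix.mul_assoc, mul_fromCols, fromCols_mul_fromBlocks, hEUk]
    simp [Matrix.mul_assoc]
  have hgram : E * A * (E * A)ᴴ =
      E * Up * S * (E * Up * S)ᴴ + E * Up * (F * D) * (E * Up * (F * D))ᴴ := by
    rw [hEA, conjTranspose_mul, conjTranspose_conjTranspose, Matrix.mul_assoc,
      ← Matrix.mul_assoc (fromCols Vk Vp)ᴴ, hV, Matrix.one_mul,
      conjTranspose_fromCols_eq_fromRows_conjTranspose, fromCols_mul_fromRows, conjTranspose_neg,
      Matrix.neg_mul, Matrix.mul_neg, neg_neg, add_comm]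
  have hcontr {c : ℕ} (T : Matrix (Fin m) (Fin c) ℂ) :
      schatten p (E * Up * T) ^ 2 ≤ schatten p T ^ 2 := by
    refine pow_le_pow_left₀ (schatten_nonneg p _) ?_ 2
    exact (schatten_mul_le_l2_opNorm_mul hp _ T).trans
      (mul_le_of_le_one_left (schatten_nonneg p T) hE)
  exact (schatten_sq_le_add_of_mul_conjTranspose_self hp hgram).trans
    (add_le_add (hcontr S) (hcontr (F * D)))

lemma power_iteration_mul_eq (hU : (fromCols Uk Up)ᴴ * fromCols Uk Up = 1)
    (hV : (fromCols Vk Vp)ᴴ * fromCols Vk Vp = 1)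
    (hA : A = fromCols Uk Up * fromBlocks D 0 0 S * (fromCols Vk Vp)ᴴ)
    {X : Matrix (Fin b) (Fin k) ℂ} (hX : Vkᴴ * X = 1) (q : ℕ) :
    (A * Aᴴ) ^ q * A * X =
      Uk * ((D * Dᴴ) ^ q * D) + Up * ((S * Sᴴ) ^ q * S * (Vpᴴ * X)) := by
  rw [hA, mul_mul_conjTranspose_pow_mul hU hV, fromBlocks_mul_conjTranspose_pow_mul,
    conjTranspose_fromCols_eq_fromRows_conjTranspose, Matrix.mul_assoc, fromRows_mul, hX,
    fromCols_mul_fromBlocks, fromCols_mul_fromRows]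
  simp [Matrix.mul_assoc]

lemma schatten_pow_mul_mul_pow_le (hp : 2 ≤ p) (B : Matrix (Fin a) (Fin m) ℂ)
    (M : Matrix (Fin a) (Fin b) ℂ) (C : Matrix (Fin b) (Fin n) ℂ) (q : ℕ) :
    schatten p ((B * Bᴴ) ^ q * M * (C * Cᴴ) ^ q) ≤ (‖B‖ * ‖C‖) ^ (2 * q) * schatten p M := by
  calc schatten p ((B * Bᴴ) ^ q * M * (C * Cᴴ) ^ q)
      ≤ schatten p ((B * Bᴴ) ^ q * M) * ‖(C * Cᴴ) ^ q‖ := schatten_mul_le_mul_l2_opNorm hp _ _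
    _ ≤ ‖(B * Bᴴ) ^ q‖ * schatten p M * ‖(C * Cᴴ) ^ q‖ := by
      gcongr
      exact schatten_mul_le_l2_opNorm_mul hp _ M
    _ ≤ ‖B‖ ^ (2 * q) * schatten p M * ‖C‖ ^ (2 * q) := by
      have := schatten_nonneg p M
      gcongr <;> exact l2_opNorm_mul_conjTranspose_pow_le _ q
    _ = (‖B‖ * ‖C‖) ^ (2 * q) * schatten p M := by ring

theorem schatten_sq_le_of_mul_power_iteration_eq_zero (hp : 2 ≤ p)
    (hU : (fromCols Uk Up)ᴴ * fromCols Uk Up = 1)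
    (hV : (fromCols Vk Vp)ᴴ * fromCols Vk Vp = 1)
    (hA : A = fromCols Uk Up * fromBlocks D 0 0 S * (fromCols Vk Vp)ᴴ)
    (hD : IsUnit D) (hE : ‖E‖ ≤ 1) {X : Matrix (Fin b) (Fin k) ℂ} (hX : Vkᴴ * X = 1) {q : ℕ}
    (hEX : E * ((A * Aᴴ) ^ q * A * X) = 0) :
    schatten p (E * A) ^ 2 ≤
      schatten p S ^ 2 + (‖S‖ * ‖D⁻¹‖) ^ (4 * q) * schatten p (S * (Vpᴴ * X)) ^ 2 := by
  have hDinv : D * D⁻¹ = 1 := mul_nonsing_inv D ((isUnit_iff_isUnit_det D).1 hD)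
  have hinvD : D⁻¹ * D = 1 := nonsing_inv_mul D ((isUnit_iff_isUnit_det D).1 hD)
  set W := (D⁻¹ * D⁻¹ᴴ) ^ q * D⁻¹ with hW
  set F := (S * Sᴴ) ^ q * S * (Vpᴴ * X) * W with hF
  have hDW : (D * Dᴴ) ^ q * D * W = 1 := mul_conjTranspose_pow_mul_mul_eq_one hDinv hinvD q
  have hgraph : (A * Aᴴ) ^ q * A * X * W = Uk + Up * F := by
    rw [power_iteration_mul_eq hU hV hA hX, Matrix.add_mul, Matrix.mul_assoc Uk, hDW,
      Matrix.mul_one, Matrix.mul_assoc Up]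
  have hEF : E * (Uk + Up * F) = 0 := by
    rw [← hgraph, ← Matrix.mul_assoc, hEX, Matrix.zero_mul]
  have hUp : Upᴴ * Up = 1 := by
    rw [conjTranspose_fromCols_eq_fromRows_conjTranspose, fromRows_mul_fromCols,
      ← fromBlocks_one] at hU
    exact (fromBlocks_inj.1 hU).2.2.2
  have hEUp : ‖E * Up‖ ≤ 1 := (l2_opNorm_mul E Up).trans
    (mul_le_one₀ hE (norm_nonneg _) (l2_opNorm_le_one_of_conjTranspose_mul_self_eq_one hUp))
  have hFD : F * D = (S * Sᴴ) ^ q * (S * (Vpᴴ * X)) * (D⁻¹ * D⁻¹ᴴ) ^ q := by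
    rw [hF, hW, Matrix.mul_assoc, Matrix.mul_assoc (_ ^ q) D⁻¹ D, hinvD, Matrix.mul_one,
      Matrix.mul_assoc (_ ^ q) S]
  calc schatten p (E * A) ^ 2 ≤ schatten p S ^ 2 + schatten p (F * D) ^ 2 :=
        schatten_sq_le_of_mul_graph_eq_zero hp hV hA hEUp hEF
    _ ≤ schatten p S ^ 2 + ((‖S‖ * ‖D⁻¹‖) ^ (2 * q) * schatten p (S * (Vpᴴ * X))) ^ 2 := by
        gcongr
        · exact schatten_nonneg p _
        · rw [hFD]
          exact schatten_pow_mul_mul_pow_le hp S _ D⁻¹ q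
    _ = _ := by rw [mul_pow, ← pow_mul]; ring_nf

end LowRank

section Coordinates

open scoped ComplexOrder Matrix.Norms.L2Operator

variable {a b c k m n : ℕ}

lemma mul_rpinv_of_rank_eq {M : Matrix (Fin a) (Fin b) ℂ} (hM : M.rank = a) : M * rpinv M = 1 := by
  have hu : IsUnit (M * Mᴴ) := by
    rw [← linearIndependent_rows_iff_isUnit, linearIndependent_iff_card_eq_finrank_span,
      Set.finrank, ← rank_eq_finrank_span_row, rank_self_mul_conjTranspose, hM, Fintype.card_fin]
  rw [rpinv, ← Matrix.mul_assoc]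
  exact mul_nonsing_inv _ ((isUnit_iff_isUnit_det _).1 hu)

lemma fromCols_colsL_colsR (M : Matrix (Fin a) (Fin (b + c)) ℂ) :
    fromCols (colsL M) (colsR M) = M.submatrix id finSumFinEquiv := by
  ext i (j | j) <;> rfl

lemma conjTranspose_fromCols_cols_mul_self {M : Matrix (Fin a) (Fin (b + c)) ℂ} (hM : Mᴴ * M = 1) :
    (fromCols (colsL M) (colsR M))ᴴ * fromCols (colsL M) (colsR M) = 1 := by
  rw [fromCols_colsL_colsR, conjTranspose_submatrix, ← Equiv.coe_refl,
    submatrix_mul_equiv, hM, submatrix_one_equiv]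

lemma diagRect_submatrix_finSumFinEquiv (σ : ℕ → ℝ) (k m n : ℕ) :
    (diagRect σ 0 (k + m) (k + n)).submatrix finSumFinEquiv finSumFinEquiv =
      fromBlocks (diagonal fun i : Fin k ↦ (σ i : ℂ)) 0 0 (diagRect σ k m n) := by
  ext (i | i) (j | j)
  · simp [diagRect, diagonal_apply, Fin.ext_iff]
  · simp [diagRect, show (i : ℕ) ≠ k + j by omega]
  · simp [diagRect, show k + (i : ℕ) ≠ j by omega]
  · simp [diagRect]

lemma mul_diagRect_mul_conjTranspose (σ : ℕ → ℝ) (U : Matrix (Fin a) (Fin (k + m)) ℂ)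
    (V : Matrix (Fin b) (Fin (k + n)) ℂ) :
    U * diagRect σ 0 (k + m) (k + n) * Vᴴ =
      fromCols (colsL U) (colsR U) *
        fromBlocks (diagonal fun i : Fin k ↦ (σ i : ℂ)) 0 0 (diagRect σ k m n) *
          (fromCols (colsL V) (colsR V))ᴴ := by
  rw [← diagRect_submatrix_finSumFinEquiv, fromCols_colsL_colsR, fromCols_colsL_colsR,
    conjTranspose_submatrix, submatrix_mul_equiv, submatrix_mul_equiv, submatrix_id_id]

lemma conjTranspose_diagRect_mul (σ : ℕ → ℝ) (k m n : ℕ) :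
    (diagRect σ k m n)ᴴ * diagRect σ k m n =
      diagonal fun j : Fin n ↦ if (j : ℕ) < m then (σ (k + j) : ℂ) ^ 2 else 0 := by
  ext i j
  rw [mul_apply, diagonal_apply]
  split_ifs with hij hi
  · subst hij
    rw [Finset.sum_eq_single ⟨i, hi⟩]
    · simp [diagRect, sq]
    · intro x _ hx
      have : (x : ℕ) ≠ i := fun h ↦ hx (Fin.ext h)
      simp [diagRect, this]
    · simp
  · refine Finset.sum_eq_zero fun x _ ↦ ?_
    simp [diagRect, show (x : ℕ) ≠ i by omega]
  · refine Finset.sum_eq_zero fun x _ ↦ ?_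
    rw [conjTranspose_apply, diagRect, of_apply, of_apply]
    split_ifs <;> simp_all [Fin.ext_iff]

lemma l2_opNorm_diagRect_le {σ : ℕ → ℝ} (hσ0 : ∀ i, 0 ≤ σ i) (hσ : Antitone σ) (k m n : ℕ) :
    ‖diagRect σ k m n‖ ≤ σ k := by
  rw [← pow_le_pow_iff_left₀ (norm_nonneg _) (hσ0 k) two_ne_zero, sq,
    ← l2_opNorm_conjTranspose_mul_self, conjTranspose_diagRect_mul, l2_opNorm_diagonal]
  refine (pi_norm_le_iff_of_nonneg (sq_nonneg _)).2 fun j ↦ ?_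
  split_ifs
  · rw [norm_pow, Complex.norm_real, Real.norm_of_nonneg (hσ0 _)]
    exact pow_le_pow_left₀ (hσ0 _) (hσ le_self_add) 2
  · simpa using sq_nonneg (σ k)

end Coordinates

open scoped Matrix.Norms.L2Operator in
theorem lowrank_error_schatten_squared_general {a b k l m n r : ℕ} {p : ℝ≥0∞} (hp : 2 ≤ p)
    {A : Matrix (Fin a) (Fin b) ℂ} {U : Matrix (Fin a) (Fin (k + m)) ℂ}
    {V : Matrix (Fin b) (Fin (k + n)) ℂ} {σ : ℕ → ℝ} (hU : Uᴴ * U = 1) (hV : Vᴴ * V = 1)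
    (hσ0 : ∀ i, 0 ≤ σ i) (hσ : Antitone σ) (hA : A = U * diagRect σ 0 (k + m) (k + n) * Vᴴ)
    (hrank : 0 < σ (k - 1)) {Ω : Matrix (Fin b) (Fin l) ℂ} (hΩ : ((colsL V)ᴴ * Ω).rank = k)
    {Q : Matrix (Fin a) (Fin r) ℂ} (hQ : Qᴴ * Q = 1) {R : Matrix (Fin r) (Fin l) ℂ} {q : ℕ}
    (hQR : (A * Aᴴ) ^ q * A * Ω = Q * R) :
    schatten p ((1 - Q * Qᴴ) * A) ^ 2 ≤
      schatten p (diagRect σ k m n) ^ 2 + (σ k / σ (k - 1)) ^ (4 * q) *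
        schatten p (diagRect σ k m n * ((colsR V)ᴴ * Ω * rpinv ((colsL V)ᴴ * Ω))) ^ 2 := by
  set G := rpinv ((colsL V)ᴴ * Ω)
  have hX : (colsL V)ᴴ * (Ω * G) = 1 := by rw [← Matrix.mul_assoc, mul_rpinv_of_rank_eq hΩ]
  have hE : ‖1 - Q * Qᴴ‖ ≤ 1 := l2_opNorm_one_sub_mul_conjTranspose_le hQ
  have hEX : (1 - Q * Qᴴ) * ((A * Aᴴ) ^ q * A * (Ω * G)) = 0 := by
    rw [← Matrix.mul_assoc _ Ω, hQR, Matrix.mul_assoc Q, ← Matrix.mul_assoc, Matrix.sub_mul,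
      Matrix.mul_assoc Q, hQ, Matrix.one_mul, Matrix.mul_one, sub_self, Matrix.zero_mul]
  have hle (i : Fin k) : σ (k - 1) ≤ ‖(σ i : ℂ)‖ := by
    rw [Complex.norm_real, Real.norm_of_nonneg (hσ0 i)]
    exact hσ (by omega)
  have hD : IsUnit (diagonal fun i : Fin k ↦ (σ i : ℂ)) := isUnit_diagonal.2 <|
    Pi.isUnit_iff.2 fun i ↦ (norm_pos_iff.1 (hrank.trans_le (hle i))).isUnit
  have hratio : ‖diagRect σ k m n‖ * ‖(diagonal fun i : Fin k ↦ (σ i : ℂ))⁻¹‖ ≤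
      σ k / σ (k - 1) :=
    mul_le_mul (l2_opNorm_diagRect_le hσ0 hσ k m n) (l2_opNorm_inv_diagonal_le hrank hle)
      (norm_nonneg _) (hσ0 k)
  rw [Matrix.mul_assoc _ Ω]
  refine (schatten_sq_le_of_mul_power_iteration_eq_zero hp
    (conjTranspose_fromCols_cols_mul_self hU) (conjTranspose_fromCols_cols_mul_self hV)
    (hA.trans (mul_diagRect_mul_conjTranspose σ U V)) hD hE hX hEX).trans ?_
  gcongr

/-- Theorem 4.2: sharper low-rank approximation error bound in the
Schatten-p norm for `p ≥ 2`. -/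
theorem lowrank_error_schatten_squared
    {k m₂ n₂ ρ : ℕ} (q : ℕ) (hk : 1 ≤ k)
    (A : Matrix (Fin (k + m₂)) (Fin (k + n₂)) ℂ)
    (U : Matrix (Fin (k + m₂)) (Fin (k + m₂)) ℂ)
    (V : Matrix (Fin (k + n₂)) (Fin (k + n₂)) ℂ)
    (σ : ℕ → ℝ)
    (hU : Uᴴ * U = 1) (hU' : U * Uᴴ = 1)
    (hV : Vᴴ * V = 1) (hV' : V * Vᴴ = 1)
    (hσ0 : ∀ i, 0 ≤ σ i) (hσm : ∀ i j, i ≤ j → σ j ≤ σ i)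
    (hA : A = U * diagRect σ 0 (k + m₂) (k + n₂) * Vᴴ)
    (hrank : 0 < σ (k - 1)) (hgap : σ k < σ (k - 1))
    (Ω : Matrix (Fin (k + n₂)) (Fin (k + ρ)) ℂ)
    (hΩ : ((colsL V)ᴴ * Ω).rank = k)
    (Q : Matrix (Fin (k + m₂)) (Fin (k + ρ)) ℂ)
    (R : Matrix (Fin (k + ρ)) (Fin (k + ρ)) ℂ)
    (hQ : Qᴴ * Q = 1) (hR : R.BlockTriangular id)
    (hQR : (A * Aᴴ) ^ q * A * Ω = Q * R)
    :
    ∀ p : ℝ≥0∞, 2 ≤ p →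
      (schatten p ((1 - Q * Qᴴ) * A)) ^ 2 ≤
        (schatten p (diagRect σ k m₂ n₂)) ^ 2 + (σ k / σ (k - 1)) ^ (4 * q) * (schatten p (diagRect σ k m₂ n₂ * ((colsR V)ᴴ * Ω * rpinv ((colsL V)ᴴ * Ω)))) ^ 2 := by
  intro p hp
  exact lowrank_error_schatten_squared_general hp hU hV hσ0 (fun i j ↦ hσm i j) hA hrank hΩ hQ hQR
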